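/- Let λ, μ ∈ ℝ, set ℂ = ℂ_{λ,μ}, and let Ω ⊆ ℝ³ be open. Let u, v : Ω → ℝ³ be twice continuously differentiable and satisfy the homogeneous Lamé system div(ℂ∇u) = 0 and div(ℂ∇v) = 0 on Ω, i.e. componentwise Σ_j ∂_j ((ℂ∇u)_{ij}) = 0 for i = 1,2,3, where (∇u)_{ij} = ∂u_i/∂x_j is the Jacobian matrix. Let 𝒰 : Ω → ℝ³ be continuously differentiable with Jacobian matrix D𝒰. Define the vector field b = (ℂ∇u · ∇v) 𝒰 − (ℂ∇u)(∇v · 𝒰) − (ℂ∇v)(∇u · 𝒰), where a matrix applied to a vector is the matrix-vector product. Then at every point of Ω, div b = (div 𝒰)(ℂ∇u · ∇v) − ℂ∇u · (∇v · D𝒰) − ℂ∇v · (∇u · D𝒰), where the products of matrices are the usual matrix products and div b = Σ_i ∂_i b_i. -/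

import Mathlib

open Matrix

/-- Frobenius inner product of real 3×3 matrices. -/
def frob (A B : Matrix (Fin 3) (Fin 3) ℝ) : ℝ := ∑ i, ∑ j, A i j * B i j

/-- Symmetric part of a matrix. -/
noncomputable def symPart (A : Matrix (Fin 3) (Fin 3) ℝ) : Matrix (Fin 3) (Fin 3) ℝ :=
  (1 / 2 : ℝ) • (A + Aᵀ)

/-- Isotropic elasticity tensor with Lamé parameters `lam`, `mu`. -/
noncomputable def elastC (lam mu : ℝ) (A : Matrix (Fin 3) (Fin 3) ℝ) :
    Matrix (Fin 3) (Fin 3) ℝ :=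
  (2 * mu) • symPart A + (lam * A.trace) • (1 : Matrix (Fin 3) (Fin 3) ℝ)

/-- Partial derivative `∂f/∂x_j` of a scalar function on `ℝ³`. -/
noncomputable def pd (f : (Fin 3 → ℝ) → ℝ) (j : Fin 3) (x : Fin 3 → ℝ) : ℝ :=
  fderiv ℝ f x (Pi.single j 1)

/-- Jacobian matrix `(∇u)_{ij} = ∂u_i/∂x_j` of a vector field on `ℝ³`. -/
noncomputable def jac (u : (Fin 3 → ℝ) → Fin 3 → ℝ) (x : Fin 3 → ℝ) :
    Matrix (Fin 3) (Fin 3) ℝ :=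
  Matrix.of fun i j => pd (fun y => u y i) j x

/-!
Write `⟪S, A⟫` for the Frobenius product and `∂_U` for the derivative along `U`. For a tensor field
`σ` and a vector field `w`, `div (σᵀ w) = (div σ) · w + ⟪σ, Dw⟫`. With `w = ∇v U`, equality of mixed
partial derivatives gives `Dw = ∂_U (∇v) + ∇v DU`. On the other hand
`div (⟪ℂ∇u, ∇v⟫ U) = ⟪ℂ∇u, ∇v⟫ div U + ∂_U ⟪ℂ∇u, ∇v⟫`, and since `ℂ` is self-adjoint,
`∂_U ⟪ℂ∇u, ∇v⟫ = ⟪ℂ∇v, ∂_U (∇u)⟫ + ⟪ℂ∇u, ∂_U (∇v)⟫`. All second derivatives in `div b` therefore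
cancel except those in `div (ℂ∇u)` and `div (ℂ∇v)`. The isotropic tensor moreover has symmetric
values, so that `σᵀ = σ` for `σ = ℂ∇u` and `σ = ℂ∇v`.
-/

open Topology
open LinearMap (toMatrix')

section CoordinateFree

variable {E F : Type*} [NormedAddCommGroup E] [NormedSpace ℝ E]
  [NormedAddCommGroup F] [NormedSpace ℝ F] {x : E}

theorem differentiableAt_fderiv {v : E → F} (hv : ContDiffAt ℝ 2 v x) :
    DifferentiableAt ℝ (fderiv ℝ v) x :=
  (hv.fderiv_right (m := 1) (by norm_num)).differentiableAt one_ne_zero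

theorem fderiv_fderiv_apply {v : E → F} {U : E → E} (hv : ContDiffAt ℝ 2 v x)
    (hU : DifferentiableAt ℝ U x) :
    fderiv ℝ (fun y => fderiv ℝ v y (U y)) x
      = fderiv ℝ (fderiv ℝ v) x (U x) + fderiv ℝ v x ∘L fderiv ℝ U x := by
  have symm_snd : (fderiv ℝ (fderiv ℝ v) x).flip (U x) = fderiv ℝ (fderiv ℝ v) x (U x) := by
    ext h
    exact (hv.isSymmSndFDerivAt (by simp)).eq h (U x)
  rw [fderiv_clm_apply (differentiableAt_fderiv hv) hU, symm_snd, add_comm]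

variable [FiniteDimensional ℝ E]

variable (E) in
/-- The trace of endomorphisms of a finite-dimensional normed space, bundled as a continuous linear
functional so that it commutes with `fderiv`. -/
noncomputable def traceCLM : (E →L[ℝ] E) →L[ℝ] ℝ :=
  LinearMap.toContinuousLinearMap (LinearMap.trace ℝ E ∘ₗ ContinuousLinearMap.coeLM ℝ)

/-- The divergence of a vector field, as the trace of its derivative. For `σ : E → F →L[ℝ] E` and a
constant `w : F`, the pairing of `w` with the divergence of the tensor field `σ` is
`divergence (fun y => σ y w)`. -/
noncomputable def divergence (w : E → E) (x : E) : ℝ := traceCLM E (fderiv ℝ w x)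

/-- The field `b` attached to a constitutive law `C` sending displacement gradients to stresses.
A stress is encoded as a map `F →L[ℝ] E`, the transpose of the stress matrix, so that
`traceCLM E (S ∘L A)` is the Frobenius product of a stress `S` and a gradient `A`. -/
noncomputable def bField (C : (E →L[ℝ] F) →L[ℝ] F →L[ℝ] E) (u v : E → F) (U : E → E) (y : E) : E :=
  traceCLM E (C (fderiv ℝ u y) ∘L fderiv ℝ v y) • U y
    - C (fderiv ℝ u y) (fderiv ℝ v y (U y)) - C (fderiv ℝ v y) (fderiv ℝ u y (U y))

theorem divergence_sub {w z : E → E} (hw : DifferentiableAt ℝ w x) (hz : DifferentiableAt ℝ z x) :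
    divergence (fun y => w y - z y) x = divergence w x - divergence z x := by
  simp only [divergence, fderiv_fun_sub hw hz, map_sub]

theorem divergence_smul {f : E → ℝ} {w : E → E} (hf : DifferentiableAt ℝ f x)
    (hw : DifferentiableAt ℝ w x) :
    divergence (fun y => f y • w y) x = f x * divergence w x + fderiv ℝ f x (w x) := by
  have trace_smulRight : traceCLM E ((fderiv ℝ f x).smulRight (w x)) = fderiv ℝ f x (w x) :=
    LinearMap.trace_smulRight _ _
  rw [divergence, fderiv_fun_smul hf hw, map_add, map_smul, trace_smulRight, smul_eq_mul,
    divergence]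

theorem divergence_clm_apply_const {σ : E → F →L[ℝ] E} (hσ : DifferentiableAt ℝ σ x) (w : F) :
    divergence (fun y => σ y w) x = traceCLM E ((fderiv ℝ σ x).flip w) := by
  simp [divergence, fderiv_clm_apply hσ (differentiableAt_const w)]

theorem divergence_clm_apply_eq_sum {ι : Type*} [Fintype ι] [DecidableEq ι]
    {σ : E → (ι → ℝ) →L[ℝ] E} (hσ : DifferentiableAt ℝ σ x) (w : ι → ℝ) :
    divergence (fun y => σ y w) x = ∑ i, divergence (fun y => σ y (Pi.single i 1)) x * w i := by
  simp only [divergence_clm_apply_const hσ]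
  conv_lhs => rw [pi_eq_sum_univ' w]
  simp only [map_sum, map_smul, smul_eq_mul, mul_comm]

theorem divergence_clm_apply {σ : E → F →L[ℝ] E} {w : E → F} (hσ : DifferentiableAt ℝ σ x)
    (hw : DifferentiableAt ℝ w x) :
    divergence (fun y => σ y (w y)) x
      = divergence (fun y => σ y (w x)) x + traceCLM E (σ x ∘L fderiv ℝ w x) := by
  rw [divergence_clm_apply_const hσ, divergence, fderiv_clm_apply hσ hw, map_add, add_comm]

theorem divergence_clm_fderiv_apply {σ : E → F →L[ℝ] E} {v : E → F} {U : E → E}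
    (hσ : DifferentiableAt ℝ σ x) (hv : ContDiffAt ℝ 2 v x) (hU : DifferentiableAt ℝ U x) :
    divergence (fun y => σ y (fderiv ℝ v y (U y))) x
      = divergence (fun y => σ y (fderiv ℝ v x (U x))) x
        + traceCLM E (σ x ∘L fderiv ℝ (fderiv ℝ v) x (U x))
        + traceCLM E (σ x ∘L fderiv ℝ v x ∘L fderiv ℝ U x) := by
  rw [divergence_clm_apply hσ ((differentiableAt_fderiv hv).clm_apply hU),
    fderiv_fderiv_apply hv hU, ContinuousLinearMap.comp_add, map_add, add_assoc]

theorem fderiv_traceCLM_comp_apply {σ : E → F →L[ℝ] E} {A : E → E →L[ℝ] F}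
    (hσ : DifferentiableAt ℝ σ x) (hA : DifferentiableAt ℝ A x) (h : E) :
    fderiv ℝ (fun y => traceCLM E (σ y ∘L A y)) x h
      = traceCLM E (fderiv ℝ σ x h ∘L A x) + traceCLM E (σ x ∘L fderiv ℝ A x h) := by
  have deriv_comp : HasFDerivAt (fun y => traceCLM E (σ y ∘L A y)) _ x :=
    (traceCLM E).hasFDerivAt.comp x (hσ.hasFDerivAt.clm_comp hA.hasFDerivAt)
  simp [deriv_comp.fderiv, add_comm]

section ConstitutiveLaw

variable (C : (E →L[ℝ] F) →L[ℝ] F →L[ℝ] E) {u v : E → F} {U : E → E}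

theorem fderiv_energy_apply (hC : ∀ A B, traceCLM E (C A ∘L B) = traceCLM E (C B ∘L A))
    (hu : ContDiffAt ℝ 2 u x) (hv : ContDiffAt ℝ 2 v x) (h : E) :
    fderiv ℝ (fun y => traceCLM E (C (fderiv ℝ u y) ∘L fderiv ℝ v y)) x h
      = traceCLM E (C (fderiv ℝ v x) ∘L fderiv ℝ (fderiv ℝ u) x h)
        + traceCLM E (C (fderiv ℝ u x) ∘L fderiv ℝ (fderiv ℝ v) x h) := by
  have hDu := differentiableAt_fderiv hu
  have fderiv_stress : fderiv ℝ (fun y => C (fderiv ℝ u y)) x h = C (fderiv ℝ (fderiv ℝ u) x h) :=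
    DFunLike.congr_fun (C.hasFDerivAt.comp x hDu.hasFDerivAt).fderiv h
  rw [fderiv_traceCLM_comp_apply (by fun_prop) (differentiableAt_fderiv hv), fderiv_stress, hC]

theorem differentiableAt_bField (hu : ContDiffAt ℝ 2 u x) (hv : ContDiffAt ℝ 2 v x)
    (hU : DifferentiableAt ℝ U x) : DifferentiableAt ℝ (bField C u v U) x := by
  have hDu := differentiableAt_fderiv hu
  have hDv := differentiableAt_fderiv hv
  unfold bField
  fun_prop

theorem divergence_bField (hC : ∀ A B, traceCLM E (C A ∘L B) = traceCLM E (C B ∘L A))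
    (hu : ContDiffAt ℝ 2 u x) (hv : ContDiffAt ℝ 2 v x) (hU : DifferentiableAt ℝ U x) :
    divergence (bField C u v U) x
      = divergence U x * traceCLM E (C (fderiv ℝ u x) ∘L fderiv ℝ v x)
        - traceCLM E (C (fderiv ℝ u x) ∘L fderiv ℝ v x ∘L fderiv ℝ U x)
        - traceCLM E (C (fderiv ℝ v x) ∘L fderiv ℝ u x ∘L fderiv ℝ U x)
        - divergence (fun y => C (fderiv ℝ u y) (fderiv ℝ v x (U x))) x
        - divergence (fun y => C (fderiv ℝ v y) (fderiv ℝ u x (U x))) x := by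
  have hDu := differentiableAt_fderiv hu
  have hDv := differentiableAt_fderiv hv
  unfold bField
  rw [divergence_sub (by fun_prop) (by fun_prop), divergence_sub (by fun_prop) (by fun_prop),
    divergence_smul (by fun_prop) hU, fderiv_energy_apply C hC hu hv,
    divergence_clm_fderiv_apply (by fun_prop) hv hU,
    divergence_clm_fderiv_apply (by fun_prop) hu hU]
  ring

end ConstitutiveLaw

end CoordinateFree

section Coordinates

variable {x : Fin 3 → ℝ}

theorem traceCLM_eq_trace_toMatrix' {ι : Type*} [Fintype ι] [DecidableEq ι]
    (A : (ι → ℝ) →L[ℝ] ι → ℝ) : traceCLM (ι → ℝ) A = (toMatrix' A.toLinearMap).trace := by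
  rw [← Matrix.trace_toLin'_eq, Matrix.toLin'_toMatrix']
  rfl

theorem jac_eq_toMatrix' {u : (Fin 3 → ℝ) → Fin 3 → ℝ} (hu : DifferentiableAt ℝ u x) :
    jac u x = toMatrix' (fderiv ℝ u x).toLinearMap := by
  ext i j
  simp [jac, pd, LinearMap.toMatrix'_apply, fderiv_pi (differentiableAt_pi.1 hu)]

theorem sum_pd_eq_divergence {w z : (Fin 3 → ℝ) → Fin 3 → ℝ} (hw : DifferentiableAt ℝ w x)
    (hzw : z =ᶠ[𝓝 x] w) : ∑ i, pd (fun y => z y i) i x = divergence w x :=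
  calc ∑ i, pd (fun y => z y i) i x
    _ = (jac z x).trace := rfl
    _ = traceCLM _ (fderiv ℝ z x) := by
      rw [traceCLM_eq_trace_toMatrix', jac_eq_toMatrix' (hw.congr_of_eventuallyEq hzw)]
    _ = divergence w x := by rw [hzw.fderiv_eq, divergence]

theorem frob_eq_trace (A B : Matrix (Fin 3) (Fin 3) ℝ) : frob A B = (Aᵀ * B).trace := by
  simp only [frob, Matrix.trace, Matrix.diag, Matrix.mul_apply, Matrix.transpose_apply]
  exact Finset.sum_comm

variable (lam mu : ℝ)

theorem elastC_add (A B : Matrix (Fin 3) (Fin 3) ℝ) :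
    elastC lam mu (A + B) = elastC lam mu A + elastC lam mu B := by
  simp only [elastC, symPart, Matrix.transpose_add, Matrix.trace_add]
  module

theorem elastC_smul (c : ℝ) (A : Matrix (Fin 3) (Fin 3) ℝ) :
    elastC lam mu (c • A) = c • elastC lam mu A := by
  simp only [elastC, symPart, Matrix.transpose_smul, Matrix.trace_smul, smul_eq_mul]
  module

theorem elastC_transpose (A : Matrix (Fin 3) (Fin 3) ℝ) :
    (elastC lam mu A)ᵀ = elastC lam mu A := by
  simp [elastC, symPart, add_comm]

theorem frob_elastC (A B : Matrix (Fin 3) (Fin 3) ℝ) :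
    frob (elastC lam mu A) B
      = mu * ((A * B).trace + (Aᵀ * B).trace) + lam * A.trace * B.trace := by
  rw [frob_eq_trace, elastC_transpose]
  simp only [elastC, symPart, Matrix.add_mul, Matrix.smul_mul, Matrix.one_mul, Matrix.trace_add,
    Matrix.trace_smul, smul_eq_mul]
  ring

theorem frob_elastC_comm (A B : Matrix (Fin 3) (Fin 3) ℝ) :
    frob (elastC lam mu A) B = frob (elastC lam mu B) A := by
  have trace_transpose_mul_comm : (Aᵀ * B).trace = (Bᵀ * A).trace := by
    rw [← Matrix.trace_transpose, Matrix.transpose_mul, Matrix.transpose_transpose]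
  rw [frob_elastC, frob_elastC, Matrix.trace_mul_comm A B, trace_transpose_mul_comm]
  ring

/-- The elasticity tensor as an operator on continuous linear maps. Its values are symmetric, so the
transposition in the encoding of stresses in `bField` is invisible here. -/
noncomputable def elastOperator :
    ((Fin 3 → ℝ) →L[ℝ] Fin 3 → ℝ) →L[ℝ] (Fin 3 → ℝ) →L[ℝ] Fin 3 → ℝ :=
  LinearMap.toContinuousLinearMap
    { toFun A := LinearMap.toContinuousLinearMap
        (Matrix.toLin' (elastC lam mu (toMatrix' A.toLinearMap)))
      map_add' A B := by
        simp only [ContinuousLinearMap.toLinearMap_add, map_add, elastC_add]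
      map_smul' c A := by
        simp only [ContinuousLinearMap.toLinearMap_smul, map_smul, elastC_smul, RingHom.id_apply] }

theorem elastOperator_apply (A : (Fin 3 → ℝ) →L[ℝ] Fin 3 → ℝ) (w : Fin 3 → ℝ) :
    elastOperator lam mu A w = elastC lam mu (toMatrix' A.toLinearMap) *ᵥ w := rfl

theorem traceCLM_elastOperator_comp (A B : (Fin 3 → ℝ) →L[ℝ] Fin 3 → ℝ) :
    traceCLM _ (elastOperator lam mu A ∘L B)
      = frob (elastC lam mu (toMatrix' A.toLinearMap)) (toMatrix' B.toLinearMap) := by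
  have toMatrix'_elastOperator : toMatrix' (elastOperator lam mu A).toLinearMap
      = elastC lam mu (toMatrix' A.toLinearMap) :=
    LinearMap.toMatrix'_toLin' _
  rw [traceCLM_eq_trace_toMatrix', ContinuousLinearMap.toLinearMap_comp, LinearMap.toMatrix'_comp,
    toMatrix'_elastOperator, frob_eq_trace, elastC_transpose]

variable {lam mu} {u v 𝒰 : (Fin 3 → ℝ) → Fin 3 → ℝ}

theorem eventually_jac_eq_toMatrix' (hu : ContDiffAt ℝ 2 u x) :
    ∀ᶠ y in 𝓝 x, jac u y = toMatrix' (fderiv ℝ u y).toLinearMap :=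
  (hu.eventually (by simp)).mono fun _ hy => jac_eq_toMatrix' (hy.differentiableAt two_ne_zero)

theorem divergence_elastOperator_apply (hu : ContDiffAt ℝ 2 u x) (w : Fin 3 → ℝ) :
    divergence (fun y => elastOperator lam mu (fderiv ℝ u y) w) x
      = ∑ i, (∑ j, pd (fun y => elastC lam mu (jac u y) i j) j x) * w i := by
  have hDu := differentiableAt_fderiv hu
  have hσ : DifferentiableAt ℝ (fun y => elastOperator lam mu (fderiv ℝ u y)) x := by fun_prop
  have divergence_column (i : Fin 3) : ∑ j, pd (fun y => elastC lam mu (jac u y) i j) j x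
      = divergence (fun y => elastOperator lam mu (fderiv ℝ u y) (Pi.single i 1)) x := by
    refine sum_pd_eq_divergence (by fun_prop) ?_
    filter_upwards [eventually_jac_eq_toMatrix' hu] with y hy
    rw [elastOperator_apply, Matrix.mulVec_single_one, ← hy]
    ext j
    exact congr_fun₂ (elastC_transpose lam mu (jac u y)) j i
  simp only [divergence_column, divergence_clm_apply_eq_sum hσ w]

theorem eventuallyEq_bField_elastOperator (hu : ContDiffAt ℝ 2 u x) (hv : ContDiffAt ℝ 2 v x) :
    (fun y => frob (elastC lam mu (jac u y)) (jac v y) • 𝒰 y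
        - (elastC lam mu (jac u y)).mulVec ((jac v y).mulVec (𝒰 y))
        - (elastC lam mu (jac v y)).mulVec ((jac u y).mulVec (𝒰 y)))
      =ᶠ[𝓝 x] bField (elastOperator lam mu) u v 𝒰 := by
  filter_upwards [eventually_jac_eq_toMatrix' hu, eventually_jac_eq_toMatrix' hv] with y hyu hyv
  simp only [bField, traceCLM_elastOperator_comp, elastOperator_apply, hyu, hyv,
    LinearMap.toMatrix'_mulVec, ContinuousLinearMap.coe_coe]

end Coordinates

theorem div_of_b_identity_general (lam mu : ℝ) {u v 𝒰 : (Fin 3 → ℝ) → Fin 3 → ℝ} {x : Fin 3 → ℝ}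
    (hu : ContDiffAt ℝ 2 u x) (hv : ContDiffAt ℝ 2 v x) (hU : DifferentiableAt ℝ 𝒰 x) :
    (∑ i, pd (fun y =>
        (frob (elastC lam mu (jac u y)) (jac v y) • 𝒰 y
          - (elastC lam mu (jac u y)).mulVec ((jac v y).mulVec (𝒰 y))
          - (elastC lam mu (jac v y)).mulVec ((jac u y).mulVec (𝒰 y))) i) i x)
      = (∑ i, pd (fun y => 𝒰 y i) i x) * frob (elastC lam mu (jac u x)) (jac v x)
        - frob (elastC lam mu (jac u x)) (jac v x * jac 𝒰 x)
        - frob (elastC lam mu (jac v x)) (jac u x * jac 𝒰 x)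
        - ∑ i, (∑ j, pd (fun y => elastC lam mu (jac u y) i j) j x) * (jac v x *ᵥ 𝒰 x) i
        - ∑ i, (∑ j, pd (fun y => elastC lam mu (jac v y) i j) j x) * (jac u x *ᵥ 𝒰 x) i := by
  have elastOperator_selfAdjoint (A B : (Fin 3 → ℝ) →L[ℝ] Fin 3 → ℝ) :
      traceCLM _ (elastOperator lam mu A ∘L B) = traceCLM _ (elastOperator lam mu B ∘L A) := by
    rw [traceCLM_elastOperator_comp, traceCLM_elastOperator_comp, frob_elastC_comm]
  rw [sum_pd_eq_divergence (differentiableAt_bField _ hu hv hU)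
      (eventuallyEq_bField_elastOperator hu hv),
    divergence_bField _ elastOperator_selfAdjoint hu hv hU,
    sum_pd_eq_divergence hU Filter.EventuallyEq.rfl,
    divergence_elastOperator_apply hu, divergence_elastOperator_apply hv]
  simp only [traceCLM_elastOperator_comp, jac_eq_toMatrix' (hu.differentiableAt two_ne_zero),
    jac_eq_toMatrix' (hv.differentiableAt two_ne_zero), jac_eq_toMatrix' hU,
    LinearMap.toMatrix'_mulVec, ContinuousLinearMap.toLinearMap_comp, LinearMap.toMatrix'_comp,
    ContinuousLinearMap.coe_coe]

/-- If `u`, `v` solve the homogeneous Lamé system `div(ℂ∇u) = 0 = div(ℂ∇v)` on an open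
set `Ω` and `𝒰` is `C¹`, then the field
`b = (ℂ∇u · ∇v) 𝒰 − (ℂ∇u)(∇v 𝒰) − (ℂ∇v)(∇u 𝒰)` satisfies
`div b = (div 𝒰)(ℂ∇u · ∇v) − ℂ∇u · (∇v D𝒰) − ℂ∇v · (∇u D𝒰)` on `Ω`. -/
theorem div_of_b_identity (lam mu : ℝ) (Ω : Set (Fin 3 → ℝ)) (hΩ : IsOpen Ω)
    (u v 𝒰 : (Fin 3 → ℝ) → Fin 3 → ℝ)
    (hu : ContDiffOn ℝ 2 u Ω) (hv : ContDiffOn ℝ 2 v Ω)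
    (hU : ContDiffOn ℝ 1 𝒰 Ω)
    (hlameu : ∀ x ∈ Ω, ∀ i, ∑ j, pd (fun y => elastC lam mu (jac u y) i j) j x = 0)
    (hlamev : ∀ x ∈ Ω, ∀ i, ∑ j, pd (fun y => elastC lam mu (jac v y) i j) j x = 0)
    (x : Fin 3 → ℝ) (hx : x ∈ Ω) :
    (∑ i, pd (fun y =>
        (frob (elastC lam mu (jac u y)) (jac v y) • 𝒰 y
          - (elastC lam mu (jac u y)).mulVec ((jac v y).mulVec (𝒰 y))
          - (elastC lam mu (jac v y)).mulVec ((jac u y).mulVec (𝒰 y))) i) i x)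
      = (∑ i, pd (fun y => 𝒰 y i) i x) * frob (elastC lam mu (jac u x)) (jac v x)
        - frob (elastC lam mu (jac u x)) (jac v x * jac 𝒰 x)
        - frob (elastC lam mu (jac v x)) (jac u x * jac 𝒰 x) := by
  have near : Ω ∈ 𝓝 x := hΩ.mem_nhds hx
  simpa [hlameu x hx, hlamev x hx] using div_of_b_identity_general lam mu (hu.contDiffAt near)
    (hv.contDiffAt near) ((hU.contDiffAt near).differentiableAt one_ne_zero)
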